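/- For all positive integers a and m and every nonnegative integer n, cp^e_{a,a,m}(n) − cp^o_{a,a,m}(n) equals the number of pairs (μ,ν) of partitions with |μ|+|ν| = n such that μ has distinct parts, every part of μ is ≥ 2a and ≡ 2a (mod m), and every part of ν is ≥ 2a and ≡ 2a (mod 2m). -/

import Mathlib

/-- `(γ, ρ, σ)` is an `(a,b,m)`-copartition. -/
def IsCopartition (a b m : ℕ) (γ ρ σ : Multiset ℕ) : Prop :=
  (∀ x ∈ γ, a ≤ x ∧ x % m = a % m) ∧
  (∀ x ∈ σ, b ≤ x ∧ x % m = b % m) ∧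
  ρ = Multiset.replicate (Multiset.card σ) (m * Multiset.card γ)

/-- The set of `(a,b,m)`-copartitions of size `n`. -/
def cpSet (a b m n : ℕ) : Set (Multiset ℕ × Multiset ℕ × Multiset ℕ) :=
  {t | IsCopartition a b m t.1 t.2.1 t.2.2 ∧ t.1.sum + t.2.1.sum + t.2.2.sum = n}

/-- `cp^o_{a,b,m}(n)`. -/
noncomputable def cpOdd (a b m n : ℕ) : ℕ :=
  {t ∈ cpSet a b m n | Odd (Multiset.card t.1)}.ncard

/-- `cp^e_{a,b,m}(n)`. -/
noncomputable def cpEven (a b m n : ℕ) : ℕ :=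
  {t ∈ cpSet a b m n | Even (Multiset.card t.1)}.ncard

/-!
Encode a partition with parts `≥ c` and `≡ c (mod m)` by the multiset of indices of its parts in
the progression `c, c + m, …`. Let `G(a, b)` be the generating function of the
`(a,b,m)`-copartitions with `x` marking `ν(γ)` and `y` marking `ν(σ)`. According to whether `a` is a
part of `γ`, `G(a, b) = G(a + m, b) + x q^a G(a, b + m)`; the same for `σ` gives
`G(a, b) = G(a, b + m) + y q^b G(a + m, b)`. Eliminating `G(a, b + m)`,
`(1 - x q^a) G(a, b) = (1 - x y q^{a+b}) G(a + m, b)`, and as `G → 1` when `a` and `b` tend to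
infinity, iterating in both parameters yields
`G(a, b) = (x y q^{a+b}; q^m)_∞ / ((x q^a; q^m)_∞ (y q^b; q^m)_∞)`.
At `x = -1`, `y = 1`, `a = b` the coefficients of `G` are `cp^e - cp^o`, and the denominator is
`(-q^a; q^m)_∞ (q^a; q^m)_∞ = (q^{2a}; q^{2m})_∞`.
-/

open PowerSeries

section GeneratingFunction

variable {α β γ R : Type*}

/-- The generating function `∑ p, f p * X ^ w p` of a family graded by `w` and weighted by `f`.
A coefficient whose index has infinitely many terms of nonzero weight gets the junk value `0`, so
`w` is assumed to be `Northcott` wherever it matters. -/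
noncomputable def weightSeries [Semiring R] (w : α → ℕ) (f : α → R) : R⟦X⟧ :=
  .mk fun n => ∑ᶠ p ∈ {p | w p = n}, f p

theorem coeff_weightSeries [Semiring R] (w : α → ℕ) (f : α → R) (n : ℕ) :
    coeff n (weightSeries w f) = ∑ᶠ p ∈ {p | w p = n}, f p :=
  coeff_mk n _

theorem finite_setOf_eq_of_northcott (w : α → ℕ) [Northcott w] (n : ℕ) : {p | w p = n}.Finite :=
  (Northcott.finite_le n).subset fun _ hp => le_of_eq hp

theorem weightSeries_comp_equiv [Semiring R] (e : β ≃ α) (w : α → ℕ) (f : α → R) :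
    weightSeries (w ∘ e) (f ∘ e) = weightSeries w f := by
  ext n
  simp only [coeff_weightSeries]
  exact finsum_mem_eq_of_bijOn e (e.bijOn fun _ => Iff.rfl) fun _ _ => rfl

theorem weightSeries_eq_add_of_isCompl_range [Semiring R] (w : α → ℕ) [Northcott w] (f : α → R)
    {i : β → α} {j : γ → α} (hi : i.Injective) (hj : j.Injective)
    (hij : IsCompl (Set.range i) (Set.range j)) :
    weightSeries w f = weightSeries (w ∘ i) (f ∘ i) + weightSeries (w ∘ j) (f ∘ j) := by
  ext n
  have hfin := finite_setOf_eq_of_northcott w n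
  have hunion : Set.range i ∪ Set.range j = Set.univ := hij.sup_eq_top
  have hsplit : {p | w p = n} = i '' {p | w (i p) = n} ∪ j '' {p | w (j p) = n} := by
    change _ = i '' (i ⁻¹' {p | w p = n}) ∪ j '' (j ⁻¹' {p | w p = n})
    rw [Set.image_preimage_eq_inter_range, Set.image_preimage_eq_inter_range,
      ← Set.inter_union_distrib_left, hunion, Set.inter_univ]
  have hdisj : Disjoint (i '' {p | w (i p) = n}) (j '' {p | w (j p) = n}) :=
    hij.disjoint.mono (Set.image_subset_range ..) (Set.image_subset_range ..)
  simp only [map_add, coeff_weightSeries, Function.comp_apply]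
  rw [hsplit] at hfin ⊢
  rw [finsum_mem_union hdisj (hfin.subset Set.subset_union_left)
    (hfin.subset Set.subset_union_right), finsum_mem_image hi.injOn, finsum_mem_image hj.injOn]

theorem weightSeries_const_add_const_mul [CommSemiring R] (w : α → ℕ) [Northcott w] (f : α → R)
    (k : ℕ) (c : R) :
    weightSeries (fun p => k + w p) (fun p => c * f p) = C c * X ^ k * weightSeries w f := by
  ext n
  rw [mul_assoc, coeff_C_mul, coeff_X_pow_mul']
  simp only [coeff_weightSeries]
  split_ifs with hk
  · have hset : {p | k + w p = n} = {p | w p = n - k} :=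
      Set.ext fun p => (by lia : k + w p = n ↔ w p = n - k)
    have hfin := finite_setOf_eq_of_northcott w (n - k)
    simp only [hset, finsum_mem_eq_finite_toFinset_sum _ hfin, Finset.mul_sum]
  · have hset : {p | k + w p = n} = ∅ :=
      Set.eq_empty_of_forall_notMem fun p (hp : k + w p = n) => by lia
    rw [hset, finsum_mem_empty, mul_zero]

theorem weightSeries_eq_add_C_mul_X_pow_mul [CommSemiring R] {w : α → ℕ} [Northcott w] {f : α → R}
    {w₁ : β → ℕ} {f₁ : β → R} {w₂ : γ → ℕ} [Northcott w₂] {f₂ : γ → R} {i : β → α} {j : γ → α}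
    (hi : i.Injective) (hj : j.Injective) (hij : IsCompl (Set.range i) (Set.range j))
    (hwi : ∀ p, w (i p) = w₁ p) (hfi : ∀ p, f (i p) = f₁ p)
    {k : ℕ} (hwj : ∀ p, w (j p) = k + w₂ p) {c : R} (hfj : ∀ p, f (j p) = c * f₂ p) :
    weightSeries w f = weightSeries w₁ f₁ + C c * X ^ k * weightSeries w₂ f₂ := by
  rw [weightSeries_eq_add_of_isCompl_range w f hi hj hij, ← weightSeries_const_add_const_mul,
    funext hwi (f := w ∘ i), funext hfi (f := f ∘ i), funext hwj (f := w ∘ j),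
    funext hfj (f := f ∘ j)]

theorem northcott_add_prod (v : α → ℕ) [Northcott v] (w : β → ℕ) [Northcott w] :
    Northcott fun p : α × β => v p.1 + w p.2 where
  finite_le n := ((Northcott.finite_le (h := v) n).prod (Northcott.finite_le (h := w) n)).subset
    fun _ hp => ⟨(Nat.le_add_right _ _).trans hp, (Nat.le_add_left _ _).trans hp⟩

theorem weightSeries_mul_weightSeries [CommSemiring R] (v : α → ℕ) [Northcott v] (w : β → ℕ)
    [Northcott w] (f : α → R) (g : β → R) :
    weightSeries v f * weightSeries w g =
      weightSeries (fun p : α × β => v p.1 + w p.2) (fun p => f p.1 * g p.2) := by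
  classical
  have := northcott_add_prod v w
  ext n
  have hfin := finite_setOf_eq_of_northcott (fun p : α × β => v p.1 + w p.2) n
  have hfiber : ∀ kl ∈ Finset.HasAntidiagonal.antidiagonal n,
      {p ∈ hfin.toFinset | (v p.1, w p.2) = kl} =
        (finite_setOf_eq_of_northcott v kl.1).toFinset ×ˢ
          (finite_setOf_eq_of_northcott w kl.2).toFinset := by
    rintro ⟨k, l⟩ hkl
    rw [Finset.HasAntidiagonal.mem_antidiagonal] at hkl
    ext p
    simp only [Finset.mem_filter, Set.Finite.mem_toFinset, Set.mem_ofPred_eq, Prod.mk.injEq,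
      Finset.mem_product]
    lia
  simp only [coeff_mul, coeff_weightSeries,
    finsum_mem_eq_finite_toFinset_sum _ (finite_setOf_eq_of_northcott _ _)]
  have hmaps : ∀ p ∈ hfin.toFinset, (v p.1, w p.2) ∈ Finset.HasAntidiagonal.antidiagonal n :=
    fun p hp => Finset.HasAntidiagonal.mem_antidiagonal.2 (hfin.mem_toFinset.1 hp)
  rw [← Finset.sum_fiberwise_of_maps_to hmaps]
  refine Finset.sum_congr rfl fun kl hkl => ?_
  rw [hfiber kl hkl, Finset.sum_product, Finset.sum_mul_sum]

theorem X_pow_dvd_weightSeries_sub_one [Ring R] {w : α → ℕ} {f : α → R} {p₀ : α} {c : ℕ}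
    (hw : w p₀ = 0) (hf : f p₀ = 1) (hc : ∀ p ≠ p₀, c ≤ w p) :
    X ^ c ∣ weightSeries w f - 1 := by
  rw [X_pow_dvd_iff]
  intro n hn
  have hunique : ∀ p, w p = n → p = p₀ := fun p hp => by_contra fun h => hn.not_ge (hp ▸ hc p h)
  rw [map_sub, coeff_one, coeff_weightSeries]
  split_ifs with hn0
  · have hset : {p | w p = n} = {p₀} :=
      Set.ext fun p => ⟨hunique p, by rintro rfl; exact hw.trans hn0.symm⟩
    rw [hset, finsum_mem_singleton, hf, sub_self]
  · have hset : {p | w p = n} = ∅ := Set.eq_empty_of_forall_notMem fun p (hp : w p = n) =>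
      hn0 (by rw [← hw, ← hunique p hp, hp])
    rw [hset, finsum_mem_empty, sub_zero]

end GeneratingFunction

theorem isUnit_one_sub_C_mul_X_pow {R : Type*} [CommRing R] (x : R) {c : ℕ} (hc : 0 < c) :
    IsUnit (1 - C x * X ^ c : R⟦X⟧) := by
  simp [isUnit_iff_constantCoeff, hc.ne']

/-- A solution of a homogeneous first-order recurrence with unit leading coefficients is determined
by its limit along the orbits of `T`. -/
theorem eq_of_mul_eq_mul_comp {ι R : Type*} [CommRing R] {T : ι → ι} {ω : ι → ℕ}
    {u v F H : ι → R⟦X⟧} (hω : ∀ i, ω i < ω (T i)) (hu : ∀ i, 0 < ω i → IsUnit (u i))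
    (hF : ∀ i, 0 < ω i → u i * F i = v i * F (T i))
    (hH : ∀ i, 0 < ω i → u i * H i = v i * H (T i))
    (hF₁ : ∀ i, X ^ ω i ∣ F i - 1) (hH₁ : ∀ i, X ^ ω i ∣ H i - 1) {i : ι} (hi : 0 < ω i) :
    F i = H i := by
  have hdvd : ∀ N i, 0 < ω i → X ^ (ω i + N) ∣ F i - H i := by
    intro N
    induction N with
    | zero => exact fun i _ => by simpa using dvd_sub (hF₁ i) (hH₁ i)
    | succ N ih =>
      intro i hi
      have hstep : u i * (F i - H i) = v i * (F (T i) - H (T i)) := by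
        rw [mul_sub, mul_sub, hF i hi, hH i hi]
      have := hω i
      rw [← (hu i hi).dvd_mul_left, hstep]
      exact ((pow_dvd_pow X (by lia)).trans (ih (T i) (by lia))).mul_left _
  rw [← sub_eq_zero]
  ext n
  exact X_pow_dvd_iff.1 (hdvd (n + 1) i hi) n (by lia)

theorem range_multiset_map {α β : Type*} (f : α → β) :
    Set.range (Multiset.map f) = {M | ∀ x ∈ M, x ∈ Set.range f} := by
  have : CanLift β α f (· ∈ Set.range f) := ⟨fun _ => id⟩
  refine Set.Subset.antisymm ?_ fun M hM => CanLift.prf M hM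
  rintro _ ⟨M, rfl⟩ x hx
  obtain ⟨i, -, rfl⟩ := Multiset.mem_map.1 hx
  exact ⟨i, rfl⟩

/-- The partition whose parts are the terms of index `i ∈ M` of the progression `c, c + m, …`:
partitions into parts `≥ c` and `≡ c (mod m)` are encoded by the indices of their parts. -/
def progression (c m : ℕ) (M : Multiset ℕ) : Multiset ℕ := M.map fun i => c + m * i

section Progression

variable {c m : ℕ}

theorem card_progression (c m : ℕ) (M : Multiset ℕ) : (progression c m M).card = M.card :=
  Multiset.card_map _ _

theorem sum_progression (c m : ℕ) (M : Multiset ℕ) :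
    (progression c m M).sum = c * M.card + m * M.sum := by
  rw [progression, Multiset.sum_map_add, Multiset.sum_map_mul_left]
  simp [mul_comm]

theorem progression_map_succ (c m : ℕ) (M : Multiset ℕ) :
    progression c m (M.map Nat.succ) = progression (c + m) m M := by
  rw [progression, progression, Multiset.map_map]
  exact Multiset.map_congr rfl fun i _ => by rw [Function.comp_apply, Nat.succ_eq_add_one]; ring

theorem progression_cons_zero (c m : ℕ) (M : Multiset ℕ) :
    progression c m (0 ::ₘ M) = c ::ₘ progression c m M :=
  Multiset.map_cons ..

theorem progression_injective (c : ℕ) (hm : 0 < m) : (progression c m).Injective :=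
  Multiset.map_injective fun i j h => by simpa [hm.ne'] using h

theorem forall_mem_progression (c m : ℕ) (M : Multiset ℕ) :
    ∀ x ∈ progression c m M, c ≤ x ∧ x % m = c % m := by
  intro x hx
  obtain ⟨i, -, rfl⟩ := Multiset.mem_map.1 hx
  exact ⟨Nat.le_add_right .., Nat.add_mul_mod_self_left ..⟩

theorem range_progression :
    Set.range (progression c m) = {M | ∀ x ∈ M, c ≤ x ∧ x % m = c % m} := by
  refine Set.Subset.antisymm ?_ fun M hM => ?_
  · rintro _ ⟨M, rfl⟩
    exact forall_mem_progression c m M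
  · refine (range_multiset_map _).ge fun x hx => ?_
    obtain ⟨hle, hmod⟩ := hM x hx
    obtain ⟨i, hi⟩ := (Nat.modEq_iff_dvd' hle).1 hmod.symm
    exact ⟨i, by dsimp only; lia⟩

theorem le_sum_progression {M : Multiset ℕ} (hM : M ≠ 0) : c ≤ (progression c m M).sum := by
  rw [sum_progression]
  exact (Nat.le_mul_of_pos_right c (Multiset.card_pos.2 hM)).trans (Nat.le_add_right _ _)

theorem northcott_sum_progression (hc : 0 < c) (hm : 0 < m) :
    Northcott fun M => (progression c m M).sum where
  finite_le n := by
    have hfin : (⋃ k ∈ Set.Iic n, Set.range (Nat.Partition.parts (n := k))).Finite :=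
      (Set.finite_Iic n).biUnion fun _ _ => Set.finite_range _
    refine (hfin.preimage (progression_injective c hm).injOn).subset fun M hM => ?_
    refine Set.mem_biUnion hM ⟨⟨progression c m M, fun {x} hx => ?_, rfl⟩, rfl⟩
    exact hc.trans_le (forall_mem_progression c m M x hx).1

theorem northcott_sum_progression_val (hc : 0 < c) (hm : 0 < m) :
    Northcott fun s : Finset ℕ => (progression c m s.val).sum where
  finite_le n := ((northcott_sum_progression hc hm).finite_le n).preimage Finset.val_injective.injOn

end Progression

theorem isCompl_range_map_succ_range_cons_zero :
    IsCompl (Set.range (Multiset.map Nat.succ)) (Set.range (Multiset.cons 0)) := by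
  have hcons : Set.range (Multiset.cons 0) = {M : Multiset ℕ | 0 ∈ M} := by
    ext M
    exact ⟨by rintro ⟨N, rfl⟩; simp, fun h => (Multiset.exists_cons_of_mem h).imp fun _ => Eq.symm⟩
  have hmap : Set.range (Multiset.map Nat.succ) = {M : Multiset ℕ | 0 ∈ M}ᶜ := by
    rw [range_multiset_map, Nat.range_succ]
    ext M
    exact ⟨fun h h0 => Nat.lt_irrefl 0 (h 0 h0),
      fun h x hx => Nat.pos_of_ne_zero fun h0 => h (h0 ▸ hx)⟩
  rw [hcons, hmap]
  exact isCompl_compl.symm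

theorem isCompl_range_finset_map_succ_range_cons_zero :
    IsCompl (Set.range fun s : Finset ℕ => s.map ⟨Nat.succ, Nat.succ_injective⟩)
      (Set.range fun s : Finset ℕ => (s.map ⟨Nat.succ, Nat.succ_injective⟩).cons 0 (by simp)) := by
  have hcons : Set.range (fun s : Finset ℕ =>
      (s.map ⟨Nat.succ, Nat.succ_injective⟩).cons 0 (by simp)) = {s | 0 ∈ s} := by
    refine Set.Subset.antisymm (by rintro _ ⟨s, rfl⟩; simp) fun s (hs : 0 ∈ s) => ?_
    exact ⟨s.preimage Nat.succ Nat.succ_injective.injOn, by ext x; cases x <;> simp [hs]⟩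
  have hmap : Set.range (fun s : Finset ℕ => s.map ⟨Nat.succ, Nat.succ_injective⟩) =
      {s | 0 ∈ s}ᶜ := by
    refine Set.Subset.antisymm (by rintro _ ⟨s, rfl⟩; simp) fun s (hs : 0 ∉ s) => ?_
    exact ⟨s.preimage Nat.succ Nat.succ_injective.injOn, by ext x; cases x <;> simp [hs]⟩
  rw [hcons, hmap]
  exact isCompl_compl.symm

/-- The `q`-product `1 / (x q^c; q^m)_∞` in combinatorial form: the generating function of the
partitions into parts `≥ c` and `≡ c (mod m)`, with `x` marking the number of parts. -/
noncomputable def partitionSeries {R : Type*} [Semiring R] (x : R) (c m : ℕ) : R⟦X⟧ :=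
  weightSeries (fun M => (progression c m M).sum) fun M => x ^ M.card

/-- The `q`-product `(-x q^c; q^m)_∞` in combinatorial form: the generating function of the
partitions into distinct parts `≥ c` and `≡ c (mod m)`, with `x` marking the number of parts. -/
noncomputable def distinctPartitionSeries {R : Type*} [Semiring R] (x : R) (c m : ℕ) : R⟦X⟧ :=
  weightSeries (fun s : Finset ℕ => (progression c m s.val).sum) fun s => x ^ s.card

/-- The size of the `(a,b,m)`-copartition `(γ, ρ, σ)` with `γ = progression a m p.1` and
`σ = progression b m p.2`, which determine `ρ`. -/
def copartitionSize (a b m : ℕ) (p : Multiset ℕ × Multiset ℕ) : ℕ :=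
  (progression a m p.1).sum + (progression b m p.2).sum + m * (p.1.card * p.2.card)

/-- The generating function of the `(a,b,m)`-copartitions `(γ, ρ, σ)`, with `x` marking `ν(γ)` and
`y` marking `ν(σ)`. -/
noncomputable def copartitionSeries {R : Type*} [Semiring R] (x y : R) (a b m : ℕ) : R⟦X⟧ :=
  weightSeries (copartitionSize a b m) fun p => x ^ p.1.card * y ^ p.2.card

theorem northcott_copartitionSize {a b m : ℕ} (ha : 0 < a) (hb : 0 < b) (hm : 0 < m) :
    Northcott (copartitionSize a b m) where
  finite_le n := by
    have := northcott_sum_progression ha hm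
    have := northcott_sum_progression hb hm
    exact ((northcott_add_prod (fun M => (progression a m M).sum)
      fun M => (progression b m M).sum).finite_le n).subset
      fun _ hp => (Nat.le_add_right _ _).trans hp

section FunctionalEquations

variable {R : Type*} [CommRing R] {a b c m : ℕ}

theorem one_sub_mul_partitionSeries (x : R) (hc : 0 < c) (hm : 0 < m) :
    (1 - C x * X ^ c) * partitionSeries x c m = partitionSeries x (c + m) m := by
  have := northcott_sum_progression hc hm
  have hsplit : partitionSeries x c m =
      partitionSeries x (c + m) m + C x * X ^ c * partitionSeries x c m :=
    weightSeries_eq_add_C_mul_X_pow_mul (Multiset.map_injective Nat.succ_injective)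
      (fun _ _ h => by simpa using h) isCompl_range_map_succ_range_cons_zero
      (fun M => by rw [progression_map_succ]) (fun M => by rw [Multiset.card_map])
      (fun M => by rw [progression_cons_zero, Multiset.sum_cons])
      (fun M => by rw [Multiset.card_cons, pow_succ'])
  linear_combination hsplit

theorem distinctPartitionSeries_eq_one_add_mul (x : R) (hc : 0 < c) (hm : 0 < m) :
    distinctPartitionSeries x c m =
      (1 + C x * X ^ c) * distinctPartitionSeries x (c + m) m := by
  have := northcott_sum_progression_val hc hm
  have := northcott_sum_progression_val (c := c + m) (by lia) hm
  have hsplit : distinctPartitionSeries x c m =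
      distinctPartitionSeries x (c + m) m + C x * X ^ c * distinctPartitionSeries x (c + m) m :=
    weightSeries_eq_add_C_mul_X_pow_mul (Finset.map_injective _)
      (fun s t h => Finset.map_injective _ <|
        Finset.val_injective ((Multiset.cons_inj_right 0).1 (congrArg Finset.val h)))
      isCompl_range_finset_map_succ_range_cons_zero
      (fun s => by rw [Finset.map_val, Function.Embedding.coeFn_mk, progression_map_succ])
      (fun s => by rw [Finset.card_map])
      (fun s => by rw [Finset.cons_val, progression_cons_zero, Multiset.sum_cons, Finset.map_val,
        Function.Embedding.coeFn_mk, progression_map_succ])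
      (fun s => by rw [Finset.card_cons, Finset.card_map, pow_succ'])
  linear_combination hsplit

theorem copartitionSeries_swap (x y : R) (a b m : ℕ) :
    copartitionSeries y x b a m = copartitionSeries x y a b m := by
  rw [copartitionSeries, copartitionSeries, ← weightSeries_comp_equiv (.prodComm _ _)]
  congr 1 <;> ext p <;>
    simp only [copartitionSize, Function.comp_apply, Equiv.prodComm_apply, Prod.fst_swap,
      Prod.snd_swap] <;>
    ring

theorem copartitionSeries_eq_add (x y : R) (ha : 0 < a) (hb : 0 < b) (hm : 0 < m) :
    copartitionSeries x y a b m =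
      copartitionSeries x y (a + m) b m + C x * X ^ a * copartitionSeries x y a (b + m) m := by
  have := northcott_copartitionSize ha hb hm
  have := northcott_copartitionSize (b := b + m) ha (by lia) hm
  have hcompl : IsCompl (Set.range (Prod.map (Multiset.map Nat.succ) id))
      (Set.range (Prod.map (Multiset.cons 0) (id : Multiset ℕ → _))) := by
    simpa only [Set.range_prodMap, Set.range_id, Set.prod_univ] using
      isCompl_range_map_succ_range_cons_zero.preimage Prod.fst
  exact weightSeries_eq_add_C_mul_X_pow_mul
    ((Multiset.map_injective Nat.succ_injective).prodMap Function.injective_id)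
    (.prodMap (fun _ _ h => by simpa using h) Function.injective_id) hcompl
    (fun p => by simp only [copartitionSize, Prod.map, progression_map_succ, Multiset.card_map, id])
    (fun p => by simp only [Prod.map, Multiset.card_map, id])
    (fun p => by
      simp only [copartitionSize, Prod.map, sum_progression, Multiset.card_cons,
        Multiset.sum_cons, id]
      ring)
    (fun p => by simp only [Prod.map, Multiset.card_cons, pow_succ', mul_assoc, id])

theorem one_sub_mul_copartitionSeries (x y : R) (ha : 0 < a) (hb : 0 < b) (hm : 0 < m) :
    (1 - C x * X ^ a) * copartitionSeries x y a b m =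
      (1 - C (x * y) * X ^ (a + b)) * copartitionSeries x y (a + m) b m := by
  have hleft := copartitionSeries_eq_add x y ha hb hm
  have hright := copartitionSeries_eq_add y x hb ha hm
  rw [copartitionSeries_swap x y a b, copartitionSeries_swap x y a (b + m),
    copartitionSeries_swap x y (a + m) b] at hright
  rw [map_mul]
  linear_combination hleft - C x * X ^ a * hright

end FunctionalEquations

section ProductFormulas

variable {R : Type*} [CommRing R] {a b c m : ℕ}

theorem X_pow_dvd_partitionSeries_sub_one (x : R) (c m : ℕ) :
    X ^ c ∣ partitionSeries x c m - 1 :=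
  X_pow_dvd_weightSeries_sub_one (p₀ := 0) rfl (pow_zero x) fun _ => le_sum_progression

theorem X_pow_dvd_distinctPartitionSeries_sub_one (x : R) (c m : ℕ) :
    X ^ c ∣ distinctPartitionSeries x c m - 1 :=
  X_pow_dvd_weightSeries_sub_one (p₀ := ∅) rfl (pow_zero x) fun _ hs =>
    le_sum_progression (Finset.val_eq_zero.not.2 hs)

theorem X_pow_min_dvd_copartitionSeries_sub_one (x y : R) (a b m : ℕ) :
    X ^ min a b ∣ copartitionSeries x y a b m - 1 := by
  refine X_pow_dvd_weightSeries_sub_one (p₀ := 0) rfl (by simp) fun p hp => ?_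
  rw [copartitionSize]
  rcases eq_or_ne p.1 0 with h₁ | h₁
  · have h₂ : p.2 ≠ 0 := fun h₂ => hp (Prod.ext h₁ h₂)
    have := le_sum_progression (c := b) (m := m) h₂
    lia
  · have := le_sum_progression (c := a) (m := m) h₁
    lia

theorem dvd_mul_sub_one {d F G : R} (hF : d ∣ F - 1) (hG : d ∣ G - 1) : d ∣ F * G - 1 := by
  simpa only [mul_one] using dvd_mul_sub_mul hF hG

theorem partitionSeries_neg_mul_partitionSeries (x : R) (hc : 0 < c) (hm : 0 < m) :
    partitionSeries (-x) c m * partitionSeries x c m =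
      partitionSeries (x ^ 2) (2 * c) (2 * m) := by
  refine eq_of_mul_eq_mul_comp (T := (· + m)) (ω := id)
    (u := fun c => 1 - C (x ^ 2) * X ^ (2 * c)) (v := 1)
    (F := fun c => partitionSeries (-x) c m * partitionSeries x c m)
    (H := fun c => partitionSeries (x ^ 2) (2 * c) (2 * m))
    (fun c => Nat.lt_add_of_pos_right hm)
    (fun c (hc : 0 < c) => isUnit_one_sub_C_mul_X_pow _ (by lia))
    (fun c (hc : 0 < c) => ?_) (fun c (hc : 0 < c) => ?_)
    (fun c => dvd_mul_sub_one (X_pow_dvd_partitionSeries_sub_one ..)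
      (X_pow_dvd_partitionSeries_sub_one ..))
    (fun c => (pow_dvd_pow X (by dsimp only [id]; lia)).trans
      (X_pow_dvd_partitionSeries_sub_one ..)) hc
  · rw [← one_sub_mul_partitionSeries (-x) hc hm, ← one_sub_mul_partitionSeries x hc hm,
      Pi.one_apply, map_neg, map_pow]
    ring
  · rw [one_sub_mul_partitionSeries _ (by lia) (by lia), Pi.one_apply, one_mul, ← mul_add]

theorem copartitionSeries_eq_distinctPartitionSeries_mul (x y : R) (ha : 0 < a) (hb : 0 < b)
    (hm : 0 < m) :
    copartitionSeries x y a b m =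
      distinctPartitionSeries (-(x * y)) (a + b) m *
        (partitionSeries x a m * partitionSeries y b m) := by
  refine eq_of_mul_eq_mul_comp (ι := ℕ × ℕ) (T := fun p => (p.1 + m, p.2 + m))
    (ω := fun p => min p.1 p.2)
    (u := fun p => (1 - C x * X ^ p.1) * (1 - C y * X ^ p.2))
    (v := fun p => (1 - C (x * y) * X ^ (p.1 + p.2)) * (1 - C (x * y) * X ^ (p.1 + p.2 + m)))
    (F := fun p => copartitionSeries x y p.1 p.2 m)
    (H := fun p => distinctPartitionSeries (-(x * y)) (p.1 + p.2) m *
      (partitionSeries x p.1 m * partitionSeries y p.2 m))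
    (i := (a, b)) (fun p => by dsimp only; lia)
    (fun p hp => ?_) (fun p hp => ?_) (fun p hp => ?_)
    (fun p => X_pow_min_dvd_copartitionSeries_sub_one ..) (fun p => ?_) (lt_min ha hb)
  · obtain ⟨ha, hb⟩ := lt_min_iff.1 hp
    exact (isUnit_one_sub_C_mul_X_pow x ha).mul (isUnit_one_sub_C_mul_X_pow y hb)
  · obtain ⟨ha, hb⟩ := lt_min_iff.1 hp
    have hfst := one_sub_mul_copartitionSeries x y ha hb hm
    have hsnd := one_sub_mul_copartitionSeries y x hb (Nat.add_pos_left ha m) hm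
    rw [copartitionSeries_swap x y, copartitionSeries_swap x y, mul_comm y x] at hsnd
    linear_combination (1 - C y * X ^ p.2) * hfst + (1 - C (x * y) * X ^ (p.1 + p.2)) * hsnd
  · obtain ⟨ha, hb⟩ := lt_min_iff.1 hp
    rw [← one_sub_mul_partitionSeries x ha hm, ← one_sub_mul_partitionSeries y hb hm,
      distinctPartitionSeries_eq_one_add_mul _ (Nat.add_pos_left ha _) hm,
      distinctPartitionSeries_eq_one_add_mul _ (by lia) hm, map_neg]
    rw [show p.1 + m + (p.2 + m) = p.1 + p.2 + m + m by ring]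
    ring
  · refine dvd_mul_sub_one ?_ (dvd_mul_sub_one ?_ ?_)
    · exact (pow_dvd_pow X (by lia)).trans (X_pow_dvd_distinctPartitionSeries_sub_one ..)
    · exact (pow_dvd_pow X (by lia)).trans (X_pow_dvd_partitionSeries_sub_one ..)
    · exact (pow_dvd_pow X (by lia)).trans (X_pow_dvd_partitionSeries_sub_one ..)

end ProductFormulas

section Counting

theorem finsum_mem_const_eq_ncard_nsmul {α M : Type*} [AddCommMonoid M] {s : Set α}
    (hs : s.Finite) (y : M) : ∑ᶠ _p ∈ s, y = s.ncard • y := by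
  rw [finsum_mem_eq_finite_toFinset_sum _ hs, Finset.sum_const, Set.ncard_eq_toFinset_card s hs]

theorem finsum_mem_neg_one_pow {α : Type*} {s : Set α} (hs : s.Finite) (g : α → ℕ) :
    ∑ᶠ p ∈ s, (-1 : ℤ) ^ g p = {p ∈ s | Even (g p)}.ncard - {p ∈ s | Odd (g p)}.ncard := by
  have hsplit : s = {p ∈ s | Even (g p)} ∪ {p ∈ s | Odd (g p)} := by
    ext p
    simp only [Set.mem_union, Set.mem_ofPred_eq, ← and_or_left, Nat.even_or_odd, and_true]
  have hdisj : Disjoint {p ∈ s | Even (g p)} {p ∈ s | Odd (g p)} :=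
    Set.disjoint_left.2 fun p hp hp' => Nat.not_even_iff_odd.2 hp'.2 hp.2
  conv_lhs => rw [hsplit]
  rw [finsum_mem_union hdisj (hs.sep _) (hs.sep _),
    finsum_mem_congr rfl fun p (hp : p ∈ {p ∈ s | Even (g p)}) => hp.2.neg_one_pow,
    finsum_mem_congr rfl fun p (hp : p ∈ {p ∈ s | Odd (g p)}) => hp.2.neg_one_pow,
    finsum_mem_const_eq_ncard_nsmul (hs.sep _), finsum_mem_const_eq_ncard_nsmul (hs.sep _),
    smul_neg, nsmul_one, nsmul_one, sub_eq_add_neg]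

variable {a b c d k m : ℕ}

/-- The `(a,b,m)`-copartition `(γ, ρ, σ)` whose parts in `γ` and `σ` have index multisets `p.1` and
`p.2`; its size is `copartitionSize a b m p`. -/
def copartitionOfIndices (a b m : ℕ) (p : Multiset ℕ × Multiset ℕ) :
    Multiset ℕ × Multiset ℕ × Multiset ℕ :=
  (progression a m p.1, Multiset.replicate p.2.card (m * p.1.card), progression b m p.2)

theorem copartitionOfIndices_injective (a b : ℕ) (hm : 0 < m) :
    (copartitionOfIndices a b m).Injective := fun p q h => by
  simp only [copartitionOfIndices, Prod.mk.injEq] at h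
  exact Prod.ext (progression_injective a hm h.1) (progression_injective b hm h.2.2)

theorem range_copartitionOfIndices :
    Set.range (copartitionOfIndices a b m) = {t | IsCopartition a b m t.1 t.2.1 t.2.2} := by
  refine Set.Subset.antisymm ?_ fun ⟨γ, ρ, σ⟩ ⟨hγ, hσ, (hρ : ρ = _)⟩ => ?_
  · rintro _ ⟨p, rfl⟩
    exact ⟨forall_mem_progression a m p.1, forall_mem_progression b m p.2,
      by simp only [copartitionOfIndices, card_progression]⟩
  · obtain ⟨M, rfl⟩ := range_progression.ge hγ
    obtain ⟨N, rfl⟩ := range_progression.ge hσ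
    exact ⟨(M, N), by rw [hρ, copartitionOfIndices, card_progression, card_progression]⟩

theorem ncard_cpSet_sep (a b : ℕ) (hm : 0 < m) (n : ℕ) (Q : ℕ → Prop) :
    {t ∈ cpSet a b m n | Q t.1.card}.ncard =
      {p | copartitionSize a b m p = n ∧ Q p.1.card}.ncard := by
  rw [← Set.ncard_preimage_of_injective_subset_range (copartitionOfIndices_injective a b hm)
    fun t ht => range_copartitionOfIndices.ge ht.1.1]
  congr 1
  ext p
  have hp : IsCopartition a b m _ _ _ := range_copartitionOfIndices.le ⟨p, rfl⟩
  have hsize : (progression a m p.1).sum + p.2.card * (m * p.1.card) + (progression b m p.2).sum =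
      copartitionSize a b m p := by
    rw [copartitionSize]
    ring
  simp only [cpSet, Set.mem_preimage, Set.mem_ofPred_eq, hp, true_and]
  simp only [copartitionOfIndices, Multiset.sum_replicate, smul_eq_mul, hsize, card_progression]

theorem coeff_copartitionSeries_neg_one_one (ha : 0 < a) (hb : 0 < b) (hm : 0 < m) (n : ℕ) :
    coeff n (copartitionSeries (-1 : ℤ) 1 a b m) = cpEven a b m n - cpOdd a b m n := by
  have := northcott_copartitionSize ha hb hm
  rw [cpEven, cpOdd, ncard_cpSet_sep a b hm, ncard_cpSet_sep a b hm, copartitionSeries,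
    coeff_weightSeries]
  simp only [one_pow, mul_one]
  exact finsum_mem_neg_one_pow (finite_setOf_eq_of_northcott _ n) _

theorem coeff_distinctPartitionSeries_mul_partitionSeries (hc : 0 < c) (hm : 0 < m) (hd : 0 < d)
    (hk : 0 < k) (n : ℕ) :
    coeff n (distinctPartitionSeries (1 : ℤ) c m * partitionSeries (1 : ℤ) d k) =
      ({p : Multiset ℕ × Multiset ℕ | p.1.Nodup ∧ (∀ x ∈ p.1, c ≤ x ∧ x % m = c % m) ∧
        (∀ x ∈ p.2, d ≤ x ∧ x % k = d % k) ∧ p.1.sum + p.2.sum = n}.ncard : ℤ) := by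
  have := northcott_sum_progression_val hc hm
  have := northcott_sum_progression hd hk
  have hinj : (Prod.map (progression c m ∘ Finset.val) (progression d k)).Injective :=
    ((progression_injective c hm).comp Finset.val_injective).prodMap (progression_injective d hk)
  rw [distinctPartitionSeries, partitionSeries, weightSeries_mul_weightSeries, coeff_weightSeries]
  simp only [one_pow, mul_one]
  have := northcott_add_prod (fun s : Finset ℕ => (progression c m s.val).sum)
    fun M => (progression d k M).sum
  rw [finsum_mem_const_eq_ncard_nsmul (finite_setOf_eq_of_northcott _ n), nsmul_one,
    ← Set.ncard_preimage_of_injective_subset_range hinj]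
  · congr 2
    ext ⟨s, M⟩
    have hs : (progression c m s.val).Nodup := s.nodup.map fun i j h => by simpa [hm.ne'] using h
    exact ⟨fun h => ⟨hs, forall_mem_progression c m _, forall_mem_progression d k _, h⟩,
      fun h => h.2.2.2⟩
  · rintro ⟨μ, ν⟩ ⟨hnodup, hμ, hν, -⟩
    obtain ⟨M, rfl⟩ := range_progression.ge hμ
    obtain ⟨N, rfl⟩ := range_progression.ge hν
    exact ⟨(⟨M, hnodup.of_map _⟩, N), rfl⟩

end Counting

theorem stmt18 (a m : ℕ) (ha : 0 < a) (hm : 0 < m) (n : ℕ) :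
    (cpEven a a m n : ℤ) - (cpOdd a a m n : ℤ) =
      ({p : Multiset ℕ × Multiset ℕ |
         p.1.Nodup ∧ (∀ x ∈ p.1, 2 * a ≤ x ∧ x % m = (2 * a) % m) ∧
         (∀ x ∈ p.2, 2 * a ≤ x ∧ x % (2 * m) = (2 * a) % (2 * m)) ∧
         p.1.sum + p.2.sum = n}).ncard := by
  have hseries : copartitionSeries (-1 : ℤ) 1 a a m =
      distinctPartitionSeries 1 (2 * a) m * partitionSeries 1 (2 * a) (2 * m) := by
    rw [copartitionSeries_eq_distinctPartitionSeries_mul (-1) 1 ha ha hm,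
      partitionSeries_neg_mul_partitionSeries 1 ha hm, mul_one, neg_neg, one_pow, two_mul a]
  rw [← coeff_copartitionSeries_neg_one_one ha ha hm, hseries]
  exact coeff_distinctPartitionSeries_mul_partitionSeries (by lia) hm (by lia) (by lia) n
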